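/- Let 0 ≤ k < n and let ρ, ρ′ be two measures on partitions of n with equal total mass such that ρ stochastically dominates ρ′ with respect to the dominance order. Then π^n_k ρ stochastically dominates π^n_k ρ′ on partitions of k. -/

import Mathlib

open scoped BigOperators

def isPartition (f : ℕ → ℕ) : Prop :=
  (∀ ⦃a b : ℕ⦄, a ≤ b → f b ≤ f a) ∧ ∃ N, ∀ a, N ≤ a → f a = 0

noncomputable def psize (f : ℕ → ℕ) : ℕ := ∑ᶠ a, f a

def addBox (mu lam : ℕ → ℕ) : Prop := ∃ r, lam = Function.update mu r (mu r + 1)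

noncomputable def dimY (lam : ℕ → ℕ) : ℕ :=
  Set.ncard { p : ℕ → ℕ → ℕ |
    p 0 = (fun _ => 0) ∧ (∀ k, isPartition (p k)) ∧
    (∀ k, k < psize lam → addBox (p k) (p (k + 1))) ∧
    (∀ k, psize lam ≤ k → p k = lam) }

def dominates (lam mu : ℕ → ℕ) : Prop :=
  ∀ k, ∑ a ∈ Finset.range k, mu a ≤ ∑ a ∈ Finset.range k, lam a

def moveBox (lam hatlam : ℕ → ℕ) (i hi : ℕ) : Prop :=
  lam i = hatlam i + 1 ∧ hatlam hi = lam hi + 1 ∧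
  ∀ a, a ≠ i → a ≠ hi → lam a = hatlam a

noncomputable def schurOnes (N : ℕ) (lam : ℕ → ℕ) : ℕ :=
  Set.ncard { T : ℕ → ℕ → ℕ |
    (∀ i j, j < lam i → 1 ≤ T i j ∧ T i j ≤ N) ∧
    (∀ i j, j + 1 < lam i → T i j ≤ T i (j + 1)) ∧
    (∀ i j, j < lam (i + 1) → T i j < T (i + 1) j) ∧
    (∀ i j, lam i ≤ j → T i j = 0) }

noncomputable def projStep (rho : (ℕ → ℕ) → ℝ) : (ℕ → ℕ) → ℝ :=
  fun mu => ∑ᶠ l ∈ { l : ℕ → ℕ | addBox mu l }, ((dimY mu : ℝ) / (dimY l : ℝ)) * rho l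

def isMeasureOn (m : ℕ) (rho : (ℕ → ℕ) → ℝ) : Prop :=
  (∀ f, 0 ≤ rho f) ∧ ∀ f, rho f ≠ 0 → isPartition f ∧ psize f = m

def stochDom (m : ℕ) (rho rho' : (ℕ → ℕ) → ℝ) : Prop :=
  ∀ U : Set (ℕ → ℕ),
    (∀ a ∈ U, ∀ b, isPartition b → psize b = m → dominates b a → b ∈ U) →
    ∑ᶠ f ∈ U, rho' f ≤ ∑ᶠ f ∈ U, rho f

open Matrix in
theorem sum_det_updateRow_diag {N : ℕ} (M : Matrix (Fin N) (Fin N) ℝ) (d : Fin N → ℝ) :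
    ∑ r, (M.updateRow r (fun j => M r j * d j)).det = (∑ j, d j) * M.det := by
  have h : ∀ r, (M.updateRow r (fun j => M r j * d j)).det
      = ∑ j, M.adjugate j r * (M r j * d j) := by
    intro r
    rw [← Matrix.cramer_transpose_apply, Matrix.cramer_eq_adjugate_mulVec,
      ← Matrix.adjugate_transpose]
    rfl
  simp_rw [h]
  rw [Finset.sum_comm, Finset.sum_mul]
  refine Finset.sum_congr rfl fun j _ => ?_
  have h2 : (M.adjugate * M) j j = M.det := by
    rw [Matrix.adjugate_mul]; simp
  rw [← h2, Matrix.mul_apply, Finset.mul_sum]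
  exact Finset.sum_congr rfl fun r _ => by ring

/-- Vandermonde product. -/
noncomputable def vdm {N : ℕ} (x : Fin N → ℝ) : ℝ := (Matrix.vandermonde x).det

theorem vdm_update {N : ℕ} (x : Fin N → ℝ) (r : Fin N) :
    ∃ K : ℝ, ∀ y, vdm (Function.update x r y) = K * ∏ j ∈ Finset.univ.erase r, (y - x j) := by
  refine ⟨(∏ j ∈ Finset.univ.erase r, (if r < j then (-1:ℝ) else 1)) *
    ∏ i ∈ Finset.univ.erase r, ∏ j ∈ Finset.univ.erase r,
      (if i < j then x j - x i else 1), fun y => ?_⟩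
  set z := Function.update x r y with hz
  have hzr : z r = y := by simp [hz]
  have hzj : ∀ j, j ≠ r → z j = x j := fun j hj => by simp [hz, hj]
  have h1 : vdm z = ∏ i, ∏ j, (if i < j then z j - z i else 1) := by
    rw [vdm, Matrix.det_vandermonde]
    refine Finset.prod_congr rfl fun i _ => ?_
    rw [← Finset.prod_filter]
    exact Finset.prod_congr (by ext j; simp) fun _ _ => rfl
  have h2 : ∀ i, ∏ j, (if i < j then z j - z i else 1) = (if i < r then z r - z i else 1) *
      ∏ j ∈ Finset.univ.erase r, (if i < j then z j - z i else 1) := fun i =>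
    (Finset.mul_prod_erase _ _ (Finset.mem_univ r)).symm
  rw [h1, ← Finset.mul_prod_erase _ _ (Finset.mem_univ r), h2 r]
  simp_rw [h2]
  rw [Finset.prod_mul_distrib]
  have h3 : ∏ i ∈ Finset.univ.erase r, ∏ j ∈ Finset.univ.erase r,
      (if i < j then z j - z i else 1) = ∏ i ∈ Finset.univ.erase r, ∏ j ∈ Finset.univ.erase r,
      (if i < j then x j - x i else 1) := by
    refine Finset.prod_congr rfl fun i hi => Finset.prod_congr rfl fun j hj => ?_
    rw [hzj i (Finset.ne_of_mem_erase hi), hzj j (Finset.ne_of_mem_erase hj)]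
  have h4 : ∀ A B C D E : ℝ, A * B = C * E → A * (B * D) = C * D * E := by
    intro A B C D E h
    rw [← mul_assoc, h]; ring
  rw [h3, if_neg (lt_irrefl r), one_mul]
  apply h4
  rw [← Finset.prod_mul_distrib, ← Finset.prod_mul_distrib]
  refine Finset.prod_congr rfl fun j hj => ?_
  have hj := Finset.ne_of_mem_erase hj
  rw [hzj j hj, hzr]
  rcases lt_or_gt_of_ne hj with h | h
  · simp [h, h.not_gt]
  · simp [h, h.not_gt]

theorem vdm_ne_zero {N : ℕ} (x : Fin N → ℝ) (hx : Function.Injective x) : vdm x ≠ 0 :=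
  Matrix.det_vandermonde_ne_zero_iff.mpr hx

theorem vdm_ratio {N : ℕ} (x : Fin N → ℝ) (hx : Function.Injective x) (r : Fin N) (y : ℝ) :
    vdm (Function.update x r y) / vdm x =
      ∏ j ∈ Finset.univ.erase r, (y - x j) / (x r - x j) := by
  obtain ⟨K, hK⟩ := vdm_update x r
  have h0 := hK (x r)
  rw [Function.update_eq_self] at h0
  have hne := vdm_ne_zero x hx
  rw [hK, h0, Finset.prod_div_distrib]
  rw [h0] at hne
  exact mul_div_mul_left _ _ (left_ne_zero_of_mul hne)

noncomputable def dmat {N : ℕ} (x : Fin N → ℝ) : Matrix (Fin N) (Fin N) ℝ :=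
  Matrix.of fun i j => (descPochhammer ℝ j).eval (x i)

theorem det_dmat {N : ℕ} (x : Fin N → ℝ) : (dmat x).det = vdm x := by
  rw [vdm, dmat, Matrix.det_eval_matrixOfPolynomials_eq_det_vandermonde x
    (fun j => descPochhammer ℝ j) (fun i => by simp [descPochhammer_natDegree])
    (fun i => monic_descPochhammer ℝ i)]

theorem vdm_branch {N : ℕ} (x : Fin N → ℝ) :
    ∑ r, x r * vdm (Function.update x r (x r - 1)) =
      (∑ r, x r - ∑ j : Fin N, (j : ℝ)) * vdm x := by
  have h : ∀ r, x r * vdm (Function.update x r (x r - 1)) =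
      x r * vdm x - ((dmat x).updateRow r (fun j => (dmat x) r j * (j : ℝ))).det := by
    intro r
    rw [← det_dmat, ← det_dmat]
    have e : dmat (Function.update x r (x r - 1)) =
        (dmat x).updateRow r (fun j => (descPochhammer ℝ j).eval (x r - 1)) := by
      ext i j
      by_cases hi : i = r
      · subst hi; simp [dmat]
      · simp [dmat, hi]
    rw [e, ← Matrix.det_updateRow_smul]
    have e2 : x r • (fun j : Fin N => (descPochhammer ℝ j).eval (x r - 1)) =
        (x r • (dmat x) r) + (-1 : ℝ) • (fun j : Fin N => (dmat x) r j * (j : ℝ)) := by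
      ext j
      have := congrArg (Polynomial.eval (x r)) (descPochhammer_succ_left ℝ (j : ℕ))
      rw [descPochhammer_succ_right] at this
      simp at this
      simp [dmat]
      linarith
    rw [e2, Matrix.det_updateRow_add, Matrix.det_updateRow_smul, Matrix.det_updateRow_smul,
      Matrix.updateRow_eq_self]
    ring
  simp_rw [h]
  rw [Finset.sum_sub_distrib, sum_det_updateRow_diag, det_dmat, sub_mul, ← Finset.sum_mul]

def Par (n : ℕ) (f : ℕ → ℕ) : Prop := isPartition f ∧ psize f = n

def down (f : ℕ → ℕ) (r : ℕ) : ℕ → ℕ := Function.update f r (f r - 1)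

theorem psize_eq {f : ℕ → ℕ} {N : ℕ} (h : ∀ a, N ≤ a → f a = 0) :
    psize f = ∑ a ∈ Finset.range N, f a := by
  apply finsum_eq_sum_of_support_subset
  intro a ha
  by_contra hc
  simp at hc
  exact ha (h a hc)

theorem Par.zero {n : ℕ} {f : ℕ → ℕ} (hf : Par n f) {a : ℕ} (ha : n ≤ a) : f a = 0 := by
  obtain ⟨⟨hanti, N, hN⟩, hs⟩ := hf
  by_contra hc
  have h1 : psize f = ∑ a ∈ Finset.range (max N (a+1)), f a :=
    psize_eq fun b hb => hN b (le_trans (le_max_left _ _) hb)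
  have h2 : ∑ b ∈ Finset.range (a+1), f b ≤ ∑ a ∈ Finset.range (max N (a+1)), f a :=
    Finset.sum_le_sum_of_subset (Finset.range_mono (le_max_right _ _))
  have h3 : ∑ b ∈ Finset.range (a+1), 1 ≤ ∑ b ∈ Finset.range (a+1), f b :=
    Finset.sum_le_sum fun b hb => by
      have := hanti (Nat.lt_succ_iff.mp (Finset.mem_range.mp hb))
      omega
  simp at h3
  omega

theorem Par.sum {n N : ℕ} {f : ℕ → ℕ} (hf : Par n f) (h : n ≤ N) :
    ∑ a ∈ Finset.range N, f a = n := by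
  rw [← psize_eq fun a ha => hf.zero (h.trans ha)]
  exact hf.2

theorem Par.anti {n : ℕ} {f : ℕ → ℕ} (hf : Par n f) {a b : ℕ} (h : a ≤ b) : f b ≤ f a :=
  hf.1.1 h

theorem Par.mk {n N : ℕ} {f : ℕ → ℕ} (h1 : ∀ a, f (a+1) ≤ f a) (h2 : ∀ a, N ≤ a → f a = 0)
    (h3 : ∑ a ∈ Finset.range N, f a = n) : Par n f :=
  ⟨⟨antitone_nat_of_succ_le h1, N, h2⟩, (psize_eq h2).trans h3⟩

theorem par_finite (n : ℕ) : {f | Par n f}.Finite := by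
  have hle : ∀ f, Par n f → ∀ a, f a ≤ n := by
    intro f hf a
    rcases le_or_gt n a with h | h
    · rw [hf.zero h]; omega
    · rw [← hf.sum le_rfl]
      exact Finset.single_le_sum (f := f) (fun _ _ => Nat.zero_le _) (Finset.mem_range.mpr h)
  have : Finite {f // Par n f} := by
    refine Finite.of_injective
      (fun f : {f // Par n f} => fun i : Fin n => (⟨f.1 i, Nat.lt_succ_iff.mpr (hle f.1 f.2 i)⟩ : Fin (n+1)))
      ?_
    intro f g h
    ext a
    rcases le_or_gt n a with ha | ha
    · rw [f.2.zero ha, g.2.zero ha]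
    · have := congrFun h ⟨a, ha⟩
      simpa using this
  exact Set.finite_coe_iff.mp this

/-- Partial sums of a single update -/
theorem partialSum_update (f : ℕ → ℕ) (r v k : ℕ) :
    (∑ a ∈ Finset.range k, Function.update f r v a) + (if r < k then f r else 0) =
      (∑ a ∈ Finset.range k, f a) + (if r < k then v else 0) := by
  induction k with
  | zero => simp
  | succ k ih =>
    rw [Finset.sum_range_succ, Finset.sum_range_succ]
    rcases lt_trichotomy r k with h | h | h
    · have : k ≠ r := by omega
      simp [h, this, Nat.lt_succ_of_lt h] at ih ⊢
      omega
    · subst h; simp at ih ⊢; omega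
    · have : k ≠ r := by omega
      have h2 : ¬ r < k := by omega
      have h3 : ¬ r < k + 1 := by omega
      simp [h2, h3, this] at ih ⊢
      omega

theorem partialSum_down {f : ℕ → ℕ} {r : ℕ} (h : f (r+1) < f r) (k : ℕ) :
    (∑ a ∈ Finset.range k, down f r a) + (if r < k then 1 else 0) =
      ∑ a ∈ Finset.range k, f a := by
  have := partialSum_update f r (f r - 1) k
  unfold down
  split_ifs at this ⊢ <;> omega

theorem Par.down {n : ℕ} {f : ℕ → ℕ} (hf : Par (n+1) f) {r : ℕ} (h : f (r+1) < f r) :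
    Par n (down f r) := by
  have hr : r < n + 1 := by
    by_contra hc
    have := hf.zero (a := r) (by omega)
    omega
  refine Par.mk (N := n+1) (fun a => ?_) (fun a ha => ?_) ?_
  · have : f (a+1) ≤ f a := hf.anti (Nat.le_succ a)
    simp only [_root_.down, Function.update_apply]
    split_ifs with h1 h2 h2
    · omega
    · subst h1; omega
    · subst h2; omega
    · exact this
  · have h1 := hf.zero ha
    simp only [_root_.down, Function.update_apply]
    split_ifs <;> omega
  · have := partialSum_down h (n+1)
    rw [hf.sum le_rfl, if_pos hr] at this
    omega

/-- removable rows -/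
def remRows (N : ℕ) (f : ℕ → ℕ) : Finset ℕ := (Finset.range N).filter (fun r => f (r+1) < f r)

theorem addBox_iff {n N : ℕ} (hN : n + 1 ≤ N) {f mu : ℕ → ℕ} (hf : Par (n+1) f) :
    (isPartition mu ∧ addBox mu f) ↔ ∃ r ∈ remRows N f, mu = down f r := by
  constructor
  · rintro ⟨hmu, r, hr⟩
    have h1 : f r = mu r + 1 := by rw [hr]; simp
    have h2 : f (r+1) = mu (r+1) := by rw [hr]; simp
    have h3 : mu (r+1) ≤ mu r := hmu.1 (Nat.le_succ r)
    refine ⟨r, ?_, ?_⟩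
    · simp only [remRows, Finset.mem_filter, Finset.mem_range]
      refine ⟨?_, by omega⟩
      by_contra hc
      have := hf.zero (a := r) (by omega)
      omega
    · rw [down, h1, hr]; simp
  · rintro ⟨r, hr, rfl⟩
    simp only [remRows, Finset.mem_filter, Finset.mem_range] at hr
    refine ⟨(hf.down hr.2).1, r, ?_⟩
    have : f r - 1 + 1 = f r := by omega
    simp [down, this]

theorem down_inj {f : ℕ → ℕ} {r s : ℕ} (hr : f (r+1) < f r) (h : down f r = down f s) :
    r = s := by
  by_contra hc
  have := congrFun h r
  simp [down, hc] at this
  omega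

def paths (lam : ℕ → ℕ) : Set (ℕ → ℕ → ℕ) := { p : ℕ → ℕ → ℕ |
    p 0 = (fun _ => 0) ∧ (∀ k, isPartition (p k)) ∧
    (∀ k, k < psize lam → addBox (p k) (p (k + 1))) ∧
    (∀ k, psize lam ≤ k → p k = lam) }

theorem dimY_eq (f : ℕ → ℕ) : dimY f = (paths f).ncard := rfl

def extPath (n : ℕ) (f : ℕ → ℕ) (q : ℕ → ℕ → ℕ) : ℕ → ℕ → ℕ := fun k => if k ≤ n then q k else f

theorem paths_succ {n N : ℕ} (hN : n + 1 ≤ N) {f : ℕ → ℕ} (hf : Par (n+1) f) :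
    paths f = ⋃ r ∈ remRows N f, extPath n f '' paths (down f r) := by
  ext p
  simp only [Set.mem_iUnion, Set.mem_image]
  constructor
  · rintro ⟨h0, hp, hs, he⟩
    rw [hf.2] at hs he
    have hb := hs n (by omega)
    rw [he (n+1) le_rfl] at hb
    obtain ⟨r, hr, hpr⟩ := (addBox_iff hN hf).1 ⟨hp n, hb⟩
    have hd := hf.down (Finset.mem_filter.mp hr).2
    refine ⟨r, hr, fun k => if k ≤ n then p k else down f r, ⟨?_, ?_, ?_, ?_⟩, ?_⟩
    · simp [h0]
    · intro k; dsimp only; split_ifs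
      · exact hp k
      · exact hd.1
    · intro k hk
      rw [hd.2] at hk
      have h1 : k ≤ n := hk.le
      have h2 : k + 1 ≤ n := hk
      simp only [h1, h2, if_true]
      exact hs k (by omega)
    · intro k hk
      rw [hd.2] at hk
      dsimp only
      split_ifs with h
      · rw [← hpr, le_antisymm h hk]
      · rfl
    · funext k
      simp only [extPath]
      split_ifs with h
      · rfl
      · exact (he k (by omega)).symm
  · rintro ⟨r, hr, q, ⟨h0, hp, hs, he⟩, rfl⟩
    have hd := hf.down (Finset.mem_filter.mp hr).2
    rw [hd.2] at hs he
    refine ⟨by simp [extPath, h0], ?_, ?_, ?_⟩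
    · intro k; simp only [extPath]; split_ifs
      · exact hp k
      · exact hf.1
    · intro k hk
      rw [hf.2] at hk
      have h1 : k ≤ n := by omega
      simp only [extPath, h1, if_true]
      split_ifs with h2
      · exact hs k (by omega)
      · rw [he k (by omega)]
        exact ((addBox_iff hN hf).2 ⟨r, hr, rfl⟩).2
    · intro k hk
      rw [hf.2] at hk
      have h1 : ¬ k ≤ n := by omega
      simp [extPath, h1]

theorem Par.eq_zero {f : ℕ → ℕ} (hf : Par 0 f) : f = fun _ => 0 :=
  funext fun a => hf.zero (Nat.zero_le a)

theorem paths_zero {f : ℕ → ℕ} (hf : Par 0 f) : paths f = {fun _ _ => 0} := by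
  ext p
  simp only [Set.mem_singleton_iff]
  constructor
  · rintro ⟨_, _, _, he⟩
    funext k
    rw [he k (by rw [hf.2]; omega), hf.eq_zero]
  · rintro rfl
    refine ⟨rfl, fun k => ?_, fun k hk => ?_, fun k _ => hf.eq_zero.symm⟩
    · have := hf.1; rwa [hf.eq_zero] at this
    · rw [hf.2] at hk; omega

theorem paths_finite {n : ℕ} : ∀ {f : ℕ → ℕ}, Par n f → (paths f).Finite := by
  induction n with
  | zero => intro f hf; rw [paths_zero hf]; exact Set.finite_singleton _
  | succ n ih =>
    intro f hf
    rw [paths_succ le_rfl hf]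
    refine Set.Finite.biUnion (Finset.finite_toSet _) fun r hr => ?_
    exact (ih (hf.down (Finset.mem_filter.mp hr).2)).image _

theorem dimY_zero {f : ℕ → ℕ} (hf : Par 0 f) : dimY f = 1 := by
  rw [dimY_eq, paths_zero hf, Set.ncard_singleton]

theorem dimY_succ {n N : ℕ} (hN : n + 1 ≤ N) {f : ℕ → ℕ} (hf : Par (n+1) f) :
    dimY f = ∑ r ∈ remRows N f, dimY (down f r) := by
  classical
  have hd : ∀ r ∈ remRows N f, Par n (down f r) := fun r hr =>
    hf.down (Finset.mem_filter.mp hr).2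
  have hfin : ∀ r ∈ remRows N f, (extPath n f '' paths (down f r)).Finite := fun r hr =>
    (paths_finite (hd r hr)).image _
  have hpn : ∀ r ∈ remRows N f, ∀ q ∈ paths (down f r), ∀ k, n ≤ k → q k = down f r := by
    intro r hr q hq k hk
    exact hq.2.2.2 k (by rw [(hd r hr).2]; exact hk)
  have hcard : ∀ r ∈ remRows N f, (extPath n f '' paths (down f r)).ncard = dimY (down f r) := by
    intro r hr
    rw [dimY_eq]
    apply Set.InjOn.ncard_image
    intro q hq q' hq' h
    funext k
    rcases le_or_gt k n with hk | hk
    · have := congrFun h k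
      simpa [extPath, hk] using this
    · rw [hpn r hr q hq k hk.le, hpn r hr q' hq' k hk.le]
  rw [dimY_eq, paths_succ hN hf, ← Finset.sum_congr rfl hcard]
  have key : ∀ s : Finset ℕ, s ⊆ remRows N f →
      (⋃ r ∈ s, extPath n f '' paths (down f r)).ncard =
        ∑ r ∈ s, (extPath n f '' paths (down f r)).ncard := by
    intro s
    induction s using Finset.induction_on with
    | empty => simp
    | insert a s ha ih =>
      intro hs
      have hss : s ⊆ remRows N f := fun x hx => hs (Finset.mem_insert_of_mem hx)
      have haR := hs (Finset.mem_insert_self a s)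
      rw [Finset.sum_insert ha, ← ih hss, Finset.set_biUnion_insert]
      refine Set.ncard_union_eq ?_ (hfin a haR)
        (Set.Finite.biUnion (Finset.finite_toSet _) fun r hr => hfin r (hss hr))
      rw [Set.disjoint_left]
      rintro p ⟨q, hq, rfl⟩ hp
      simp only [Set.mem_iUnion, Set.mem_image] at hp
      obtain ⟨r, hr, q', hq', h⟩ := hp
      have := congrFun h n
      simp only [extPath, le_refl, if_true] at this
      rw [hpn r (hss hr) q' hq' n le_rfl, hpn a haR q hq n le_rfl] at this
      have hra := down_inj (Finset.mem_filter.mp (hss hr)).2 this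
      exact ha (hra ▸ hr)
  exact key _ subset_rfl

def lrow (N : ℕ) (f : ℕ → ℕ) (i : Fin N) : ℕ := f i + (N - 1 - i)

def xrow (N : ℕ) (f : ℕ → ℕ) (i : Fin N) : ℝ := (lrow N f i : ℝ)

noncomputable def gdim (N : ℕ) (f : ℕ → ℕ) : ℝ :=
  vdm (xrow N f) / ∏ i, ((lrow N f i).factorial : ℝ)

theorem lrow_lt {n N : ℕ} {f : ℕ → ℕ} (hf : Par n f) {i j : Fin N} (h : i < j) :
    lrow N f j < lrow N f i := by
  have h1 : f j ≤ f i := hf.anti (le_of_lt h)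
  have h2 : (i : ℕ) < j := h
  have := j.2
  unfold lrow
  omega

theorem xrow_inj {n N : ℕ} {f : ℕ → ℕ} (hf : Par n f) : Function.Injective (xrow N f) := by
  intro i j h
  have h : lrow N f i = lrow N f j := by simpa [xrow] using h
  rcases lt_trichotomy i j with h1 | h1 | h1
  · have := lrow_lt hf h1; omega
  · exact h1
  · have := lrow_lt hf h1; omega

theorem facprod_ne (N : ℕ) (f : ℕ → ℕ) : (∏ i, ((lrow N f i).factorial : ℝ)) ≠ 0 :=
  Finset.prod_ne_zero_iff.mpr fun i _ => by exact_mod_cast Nat.factorial_ne_zero _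

theorem gdim_ne {n N : ℕ} {f : ℕ → ℕ} (hf : Par n f) : gdim N f ≠ 0 :=
  div_ne_zero (vdm_ne_zero _ (xrow_inj hf)) (facprod_ne N f)

theorem lrow_down {N : ℕ} {f : ℕ → ℕ} {r : Fin N} (h : f (r+1) < f r) :
    lrow N (down f r) = Function.update (lrow N f) r (lrow N f r - 1) := by
  funext i
  by_cases hi : i = r
  · subst hi
    simp only [lrow, down, Function.update_self]
    omega
  · have : (i : ℕ) ≠ r := fun h => hi (Fin.ext h)
    simp [lrow, down, hi, this]

theorem xrow_down {N : ℕ} {f : ℕ → ℕ} {r : Fin N} (h : f (r+1) < f r) :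
    xrow N (down f r) = Function.update (xrow N f) r (xrow N f r - 1) := by
  have h1 : 1 ≤ lrow N f r := by unfold lrow; omega
  funext i
  simp only [xrow, lrow_down h]
  by_cases hi : i = r
  · subst hi
    simp [Nat.cast_sub h1]
  · simp [hi, xrow]

theorem gdim_down {N : ℕ} {f : ℕ → ℕ} {r : Fin N} (h : f (r+1) < f r) :
    gdim N (down f r) = xrow N f r * vdm (Function.update (xrow N f) r (xrow N f r - 1)) /
      ∏ i, ((lrow N f i).factorial : ℝ) := by
  have h1 : 1 ≤ lrow N f r := by unfold lrow; omega
  rw [gdim, xrow_down h, lrow_down h]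
  have e : (∏ i, ((lrow N f i).factorial : ℝ)) = xrow N f r *
      ∏ i, ((Function.update (lrow N f) r (lrow N f r - 1) i).factorial : ℝ) := by
    rw [← Finset.mul_prod_erase _ _ (Finset.mem_univ r),
      ← Finset.mul_prod_erase _ (fun i =>
        ((Function.update (lrow N f) r (lrow N f r - 1) i).factorial : ℝ)) (Finset.mem_univ r),
      ← mul_assoc]
    congr 1
    · rw [Function.update_self, xrow]
      exact_mod_cast (Nat.mul_factorial_pred (by omega)).symm
    · refine Finset.prod_congr rfl fun i hi => ?_
      rw [Function.update_of_ne (Finset.ne_of_mem_erase hi)]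
  have hx : xrow N f r ≠ 0 := by unfold xrow; exact_mod_cast (by omega)
  rw [e, mul_div_mul_left _ _ hx]

theorem not_rem_zero {n N : ℕ} {f : ℕ → ℕ} (hf : Par n f) (hN : n ≤ N) {r : Fin N}
    (h : ¬ f (r+1) < f r) :
    xrow N f r * vdm (Function.update (xrow N f) r (xrow N f r - 1)) = 0 := by
  have h1 : f (r+1) ≤ f r := hf.anti (Nat.le_succ _)
  by_cases hr : (r : ℕ) + 1 < N
  · rw [vdm, Matrix.det_vandermonde_eq_zero_iff.mpr, mul_zero]
    refine ⟨r, ⟨r + 1, hr⟩, ?_, ?_⟩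
    · have hne : (⟨r + 1, hr⟩ : Fin N) ≠ r := by
        intro h; have := congrArg Fin.val h; simp at this
      rw [Function.update_self, Function.update_of_ne hne]
      have : lrow N f r = lrow N f ⟨r+1, hr⟩ + 1 := by
        simp only [lrow]; omega
      simp only [xrow, this]; push_cast; ring
    · intro h; have := congrArg Fin.val h; simp at this
  · have hz := hf.zero (a := r + 1) (by omega)
    have : lrow N f r = 0 := by
      unfold lrow; omega
    simp [xrow, this]

theorem branch_sum {n N : ℕ} {f : ℕ → ℕ} (hf : Par n f) (hN : n ≤ N) :
    ∑ r, xrow N f r * vdm (Function.update (xrow N f) r (xrow N f r - 1)) =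
      (n : ℝ) * vdm (xrow N f) := by
  rw [vdm_branch]
  congr 1
  have h1 : ∑ r, xrow N f r = ∑ r : Fin N, (f r : ℝ) + ∑ r : Fin N, ((N - 1 - r : ℕ) : ℝ) := by
    rw [← Finset.sum_add_distrib]
    exact Finset.sum_congr rfl fun r _ => by simp [xrow, lrow]
  have h2 : ∑ r : Fin N, ((N - 1 - r : ℕ) : ℝ) = ∑ j : Fin N, (j : ℝ) := by
    rw [Finset.sum_range (fun i => ((i : ℕ) : ℝ)) |>.symm,
      Finset.sum_range (fun i => ((N - 1 - i : ℕ) : ℝ)) |>.symm]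
    exact Finset.sum_range_reflect (fun i => ((i : ℕ) : ℝ)) N
  have h3 : ∑ r : Fin N, (f r : ℝ) = n := by
    rw [Finset.sum_range (fun i => (f i : ℝ)) |>.symm]
    exact_mod_cast hf.sum hN
  rw [h1, h2, h3]; ring

theorem sum_remRows (N : ℕ) (f : ℕ → ℕ) (g : ℕ → ℝ) :
    ∑ r ∈ remRows N f, g r = ∑ r : Fin N, if f (r+1) < f r then g r else 0 := by
  rw [remRows, Finset.sum_filter, Finset.sum_range]

theorem dim_formula {N : ℕ} : ∀ n, n ≤ N → ∀ f, Par n f →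
    (dimY f : ℝ) * gdim N (fun _ => 0) = (n.factorial : ℝ) * gdim N f := by
  intro n
  induction n with
  | zero =>
    intro _ f hf
    rw [dimY_zero hf, hf.eq_zero]; simp
  | succ n ih =>
    intro hN f hf
    rw [dimY_succ hN hf]
    push_cast
    rw [Finset.sum_mul, sum_remRows]
    have : ∀ r : Fin N, (if f (r+1) < f r then
        (dimY (down f r) : ℝ) * gdim N (fun _ => 0) else 0) =
        (n.factorial : ℝ) / (∏ i, ((lrow N f i).factorial : ℝ)) *
        (xrow N f r * vdm (Function.update (xrow N f) r (xrow N f r - 1))) := by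
      intro r
      split_ifs with h
      · rw [ih (by omega) _ (hf.down h), gdim_down h]; ring
      · rw [not_rem_zero hf hN h, mul_zero]
    rw [Finset.sum_congr rfl fun r _ => this r, ← Finset.mul_sum, branch_sum hf hN, gdim,
      Nat.factorial_succ]
    push_cast
    ring

theorem par_zero_fun : Par 0 (fun _ => 0) :=
  Par.mk (N := 0) (fun _ => le_rfl) (fun _ _ => rfl) (by simp)

theorem dimY_ne {n : ℕ} {f : ℕ → ℕ} (hf : Par n f) : (dimY f : ℝ) ≠ 0 := by
  intro h
  have := dim_formula n le_rfl f hf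
  rw [h, zero_mul] at this
  have h2 : (n.factorial : ℝ) ≠ 0 := by exact_mod_cast Nat.factorial_ne_zero n
  exact mul_ne_zero h2 (gdim_ne hf) this.symm

/-- transition probability of removing a box in row `r` -/
noncomputable def pr (f : ℕ → ℕ) (r : ℕ) : ℝ :=
  if f (r+1) < f r then (dimY (down f r) : ℝ) / dimY f else 0

theorem pr_nonneg (f : ℕ → ℕ) (r : ℕ) : 0 ≤ pr f r := by
  unfold pr; split_ifs <;> positivity

theorem pr_sum {n N : ℕ} {f : ℕ → ℕ} (hf : Par (n+1) f) (hN : n + 1 ≤ N) :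
    ∑ r ∈ Finset.range N, pr f r = 1 := by
  unfold pr
  rw [← Finset.sum_filter, ← Finset.sum_div, div_eq_one_iff_eq (dimY_ne hf)]
  exact_mod_cast (dimY_succ hN hf).symm

theorem pr_eq {n N : ℕ} {f : ℕ → ℕ} (hf : Par (n+1) f) (hN : n + 1 ≤ N) (r : Fin N) :
    pr f r = xrow N f r / (n + 1) * ∏ j ∈ Finset.univ.erase r,
      (xrow N f r - 1 - xrow N f j) / (xrow N f r - xrow N f j) := by
  rw [← vdm_ratio _ (xrow_inj hf)]
  have hv := vdm_ne_zero _ (xrow_inj (N := N) hf)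
  have hP := facprod_ne N f
  have hn : ((n : ℝ) + 1) ≠ 0 := by positivity
  unfold pr
  split_ifs with h
  · have h0 : gdim N (fun _ => 0) ≠ 0 := gdim_ne par_zero_fun
    have hnf : (n.factorial : ℝ) ≠ 0 := by exact_mod_cast Nat.factorial_ne_zero n
    have e1 := dim_formula (N := N) (n+1) hN f hf
    have e2 := dim_formula (N := N) n (by omega) _ (hf.down h)
    rw [← mul_div_mul_right _ _ h0, e1, e2, gdim_down h, gdim, Nat.factorial_succ]
    push_cast
    field_simp
  · have := not_rem_zero hf hN h
    rw [div_mul_div_comm, this, zero_div]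

theorem partialSum_move {f g : ℕ → ℕ} {h i : ℕ} (hi : h < i) (hm : moveBox f g i h) (k : ℕ) :
    (∑ a ∈ Finset.range k, g a) + (if i < k then 1 else 0) =
      (∑ a ∈ Finset.range k, f a) + (if h < k then 1 else 0) := by
  obtain ⟨h1, h2, h3⟩ := hm
  induction k with
  | zero => simp
  | succ k ih =>
    rw [Finset.sum_range_succ, Finset.sum_range_succ]
    by_cases hkh : k = h
    · subst hkh
      split_ifs at ih ⊢ <;> omega
    · by_cases hki : k = i
      · subst hki
        split_ifs at ih ⊢ <;> omega
      · have := h3 k hki hkh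
        split_ifs at ih ⊢ <;> omega

theorem exists_move {n : ℕ} {f g : ℕ → ℕ} (hf : Par n f) (hg : Par n g) (hd : dominates g f)
    (hne : f ≠ g) :
    ∃ f' h i, h < i ∧ moveBox f f' i h ∧ Par n f' ∧ dominates g f' := by
  classical
  have hex : ∃ a, f a ≠ g a := by
    by_contra hc
    push Not at hc
    exact hne (funext hc)
  obtain ⟨h, hh, hmin⟩ : ∃ h, f h ≠ g h ∧ ∀ a, a < h → f a = g a :=
    ⟨Nat.find hex, Nat.find_spec hex, fun a ha => by
      have := Nat.find_min hex ha
      push Not at this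
      exact this⟩
  have hSh : ∑ a ∈ Finset.range h, f a = ∑ a ∈ Finset.range h, g a :=
    Finset.sum_congr rfl fun a ha => hmin a (Finset.mem_range.mp ha)
  have hlt : f h < g h := by
    have := hd (h+1)
    rw [Finset.sum_range_succ, Finset.sum_range_succ] at this
    omega
  have hex2 : ∃ k, h < k ∧ ∑ a ∈ Finset.range k, f a = ∑ a ∈ Finset.range k, g a :=
    ⟨n + h + 1, by omega, by rw [hf.sum (by omega), hg.sum (by omega)]⟩
  obtain ⟨k, ⟨hk1, hk2⟩, hkmin⟩ : ∃ k, (h < k ∧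
      ∑ a ∈ Finset.range k, f a = ∑ a ∈ Finset.range k, g a) ∧ ∀ j, j < k → ¬ (h < j ∧
      ∑ a ∈ Finset.range j, f a = ∑ a ∈ Finset.range j, g a) :=
    ⟨Nat.find hex2, Nat.find_spec hex2, fun j hj => Nat.find_min hex2 hj⟩
  obtain ⟨i, rfl⟩ : ∃ i, k = i + 1 := ⟨k - 1, by omega⟩
  have hhi : h < i := by
    rcases Nat.lt_succ_iff_lt_or_eq.mp hk1 with h' | h'
    · exact h'
    · subst h'
      rw [Finset.sum_range_succ, Finset.sum_range_succ] at hk2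
      omega
  have hstrict : ∀ j, h < j → j ≤ i →
      ∑ a ∈ Finset.range j, f a < ∑ a ∈ Finset.range j, g a := by
    intro j h1 h2
    refine lt_of_le_of_ne (hd j) fun h3 => hkmin j (by omega) ⟨h1, h3⟩
  have hfi : g i < f i := by
    have h1 := hstrict i hhi le_rfl
    rw [Finset.sum_range_succ, Finset.sum_range_succ] at hk2
    omega
  have hfi1 : f (i+1) < f i := by
    have h1 := hd (i+2)
    rw [Finset.sum_range_succ, Finset.sum_range_succ _ (i+1), hk2] at h1
    have h2 : g (i+1) ≤ g i := hg.anti (Nat.le_succ i)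
    omega
  have hhn : h < n := by
    by_contra hc
    have := hg.zero (a := h) (by omega)
    omega
  have hin : i < n := by
    by_contra hc
    have := hf.zero (a := i) (by omega)
    omega
  have hm : moveBox f (fun a => if a = h then f a + 1 else if a = i then f a - 1 else f a) i h := by
    refine ⟨?_, ?_, ?_⟩
    · have : i ≠ h := by omega
      simp only [this, if_false, if_true]
      omega
    · simp
    · intro a h1 h2
      simp [h1, h2]
  refine ⟨_, h, i, hhi, hm, Par.mk (N := n) (fun a => ?_) (fun a ha => ?_) ?_, fun k => ?_⟩
  · have h1 : f (a+1) ≤ f a := hf.anti (Nat.le_succ a)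
    have h2 : g (a+1) ≤ g a := hg.anti (Nat.le_succ a)
    by_cases e1 : a + 1 = h
    · have h3 := hmin a (by omega)
      have : a ≠ h := by omega
      have : a ≠ i := by omega
      subst e1
      simp [*] at *
      omega
    · by_cases e2 : a = i
      · subst e2
        have : a ≠ h := by omega
        have : a + 1 ≠ h := by omega
        simp [*]
        omega
      · split_ifs <;> omega
  · have := hf.zero ha
    split_ifs <;> omega
  · have := partialSum_move hhi hm n
    rw [if_pos hhn, if_pos hin, hf.sum le_rfl] at this
    omega
  · have h1 := partialSum_move hhi hm k
    have h2 := hd k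
    have h3 := hstrict k
    beta_reduce at h1 ⊢
    split_ifs at h1 <;> omega

theorem move_induction {n : ℕ} (g : (ℕ → ℕ) → ℝ)
    (hstep : ∀ f f' h i, Par n f → Par n f' → h < i → moveBox f f' i h → g f ≤ g f') :
    ∀ f f', Par n f → Par n f' → dominates f' f → g f ≤ g f' := by
  intro f f' hf hf' hd
  obtain ⟨m, hm⟩ : ∃ m, m = (∑ k ∈ Finset.range (n+1), ∑ a ∈ Finset.range k, f' a) -
      ∑ k ∈ Finset.range (n+1), ∑ a ∈ Finset.range k, f a := ⟨_, rfl⟩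
  induction m using Nat.strong_induction_on generalizing f with
  | _ m ih =>
    by_cases hne : f = f'
    · rw [hne]
    · obtain ⟨f1, h, i, hhi, hmv, hp, hd1⟩ := exists_move hf hf' hd hne
      refine (hstep f f1 h i hf hp hhi hmv).trans (ih _ ?_ f1 hp hd1 rfl)
      have hin : i < n := by
        by_contra hc
        have := hf.zero (a := i) (by omega)
        have := hmv.1
        omega
      have h1 : ∑ k ∈ Finset.range (n+1), ∑ a ∈ Finset.range k, f a <
          ∑ k ∈ Finset.range (n+1), ∑ a ∈ Finset.range k, f1 a := by
        refine Finset.sum_lt_sum (fun k _ => ?_) ⟨h+1, Finset.mem_range.mpr (by omega), ?_⟩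
        · have := partialSum_move hhi hmv k
          split_ifs at this <;> omega
        · have := partialSum_move hhi hmv (h+1)
          split_ifs at this <;> omega
      have h2 : ∑ k ∈ Finset.range (n+1), ∑ a ∈ Finset.range k, f1 a ≤
          ∑ k ∈ Finset.range (n+1), ∑ a ∈ Finset.range k, f' a :=
        Finset.sum_le_sum fun k _ => hd1 k
      omega

theorem factor_nonneg {a b : ℕ} (h : a ≠ b) : 0 ≤ ((a : ℝ) - 1 - b) / ((a : ℝ) - b) := by
  rcases lt_or_gt_of_ne h with h | h
  · have : (a : ℝ) + 1 ≤ b := by exact_mod_cast h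
    exact div_nonneg_of_nonpos (by linarith) (by linarith)
  · have : (b : ℝ) + 1 ≤ a := by exact_mod_cast h
    exact div_nonneg (by linarith) (by linarith)

theorem two_factor_lt {a b : ℝ} (ha : 2 ≤ a) (hab : a ≤ b) :
    ((a - 1 - 1) / (a - 1)) * ((b + 1 - 1) / (b + 1)) ≤ ((a - 1) / a) * ((b - 1) / b) := by
  rw [div_mul_div_comm, div_mul_div_comm, div_le_div_iff₀ (by nlinarith) (by nlinarith)]
  nlinarith [mul_nonneg (by linarith : (0:ℝ) ≤ b - (a - 1)) (by linarith : (0:ℝ) ≤ b + (a - 1))]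

theorem two_factor_gt {a b : ℝ} (hb : 2 ≤ b) (hab : b ≤ a) :
    ((a + 1) / a) * ((b + 1) / b) ≤ ((a + 1 + 1) / (a + 1)) * ((b - 1 + 1) / (b - 1)) := by
  rw [div_mul_div_comm, div_mul_div_comm, div_le_div_iff₀ (by nlinarith) (by nlinarith)]
  nlinarith [mul_nonneg (by linarith : (0:ℝ) ≤ (a + 1) - b) (by linarith : (0:ℝ) ≤ b + (a + 1))]

theorem pr_split {n N : ℕ} {f : ℕ → ℕ} (hf : Par (n+1) f) (hN : n + 1 ≤ N) (r h i : Fin N)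
    (hrh : h ≠ r) (hri : i ≠ r) (hhi : i ≠ h) :
    pr f r = (xrow N f r / (n + 1) * ∏ j ∈ ((Finset.univ.erase r).erase h).erase i,
      (xrow N f r - 1 - xrow N f j) / (xrow N f r - xrow N f j)) *
      (((xrow N f r - 1 - xrow N f h) / (xrow N f r - xrow N f h)) *
      ((xrow N f r - 1 - xrow N f i) / (xrow N f r - xrow N f i))) := by
  rw [pr_eq hf hN r, ← Finset.mul_prod_erase (Finset.univ.erase r) _ (a := h) (by simp [hrh]),
    ← Finset.mul_prod_erase ((Finset.univ.erase r).erase h) _ (a := i) (by simp [hri, hhi])]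
  ring

theorem pr_move_common {n N : ℕ} {f g : ℕ → ℕ} {h i r : Fin N} (hf : Par (n+1) f)
    (hg : Par (n+1) g) (hN : n + 1 ≤ N) (hhi : h < i) (hm : moveBox f g i h)
    (hrh : h ≠ r) (hri : i ≠ r) :
    ∃ C : ℝ, 0 ≤ C ∧ xrow N g r = xrow N f r ∧
      xrow N g h = xrow N f h + 1 ∧ xrow N g i = xrow N f i - 1 ∧
      pr f r = C *
      (((xrow N f r - 1 - xrow N f h) / (xrow N f r - xrow N f h)) *
      ((xrow N f r - 1 - xrow N f i) / (xrow N f r - xrow N f i))) ∧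
      pr g r = C *
      (((xrow N g r - 1 - xrow N g h) / (xrow N g r - xrow N g h)) *
      ((xrow N g r - 1 - xrow N g i) / (xrow N g r - xrow N g i))) := by
  obtain ⟨h1, h2, h3⟩ := hm
  have hx : ∀ j : Fin N, j ≠ h → j ≠ i → xrow N g j = xrow N f j := by
    intro j hj hj'
    have := h3 j (fun e => hj' (Fin.ext e)) (fun e => hj (Fin.ext e))
    simp [xrow, lrow, this]
  have hxr := hx r hrh.symm hri.symm
  refine ⟨_, ?_, hxr, ?_, ?_, pr_split hf hN r h i hrh hri hhi.ne', ?_⟩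
  · refine mul_nonneg (div_nonneg (Nat.cast_nonneg _) (by positivity))
      (Finset.prod_nonneg fun j hj => ?_)
    refine factor_nonneg fun e => ?_
    have : r = j := xrow_inj hf (by simp only [xrow, e])
    simp [this] at hj
  · simp only [xrow, lrow, h2]; push_cast; ring
  · simp only [xrow, lrow, h1]; push_cast; ring
  · rw [pr_split hg hN r h i hrh hri hhi.ne', hxr]
    congr 2
    refine Finset.prod_congr rfl fun j hj => ?_
    simp only [Finset.mem_erase] at hj
    rw [hx j hj.2.1 hj.1]

theorem xrow_lt {n N : ℕ} {f : ℕ → ℕ} (hf : Par n f) {i j : Fin N} (h : i < j) :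
    xrow N f j + 1 ≤ xrow N f i := by
  have := lrow_lt hf h
  simp only [xrow]
  exact_mod_cast this

theorem pr_move_lt {n N : ℕ} {f g : ℕ → ℕ} {h i r : ℕ} (hf : Par (n+1) f)
    (hg : Par (n+1) g) (hN : n + 1 ≤ N) (hiN : i < N) (hhi : h < i) (hm : moveBox f g i h)
    (hr : r < h) : pr g r ≤ pr f r := by
  have hrh : (⟨r, by omega⟩ : Fin N) < ⟨h, by omega⟩ := hr
  have hhi' : (⟨h, by omega⟩ : Fin N) < ⟨i, hiN⟩ := hhi
  obtain ⟨C, hC, e1, e2, e3, e4, e5⟩ := pr_move_common (h := ⟨h, by omega⟩) (i := ⟨i, hiN⟩)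
    (r := ⟨r, by omega⟩) hf hg hN hhi hm hrh.ne' (hrh.trans hhi').ne'
  have a1 := xrow_lt hg hrh
  have a2 := xrow_lt hf hhi'
  change pr f r = _ at e4
  change pr g r = _ at e5
  rw [e4, e5]
  refine mul_le_mul_of_nonneg_left ?_ hC
  rw [e1, e2] at a1
  rw [e1, e2, e3]
  have := two_factor_lt (a := xrow N f ⟨r, by omega⟩ - xrow N f ⟨h, by omega⟩)
    (b := xrow N f ⟨r, by omega⟩ - xrow N f ⟨i, hiN⟩) (by linarith) (by linarith)
  refine le_trans (le_of_eq ?_) (this.trans (le_of_eq ?_)) <;> (congr 2 <;> ring)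

theorem pr_move_gt {n N : ℕ} {f g : ℕ → ℕ} {h i r : ℕ} (hf : Par (n+1) f)
    (hg : Par (n+1) g) (hN : n + 1 ≤ N) (hrN : r < N) (hhi : h < i) (hm : moveBox f g i h)
    (hr : i < r) : pr f r ≤ pr g r := by
  have hri : (⟨i, by omega⟩ : Fin N) < ⟨r, hrN⟩ := hr
  have hhi' : (⟨h, by omega⟩ : Fin N) < ⟨i, by omega⟩ := hhi
  obtain ⟨C, hC, e1, e2, e3, e4, e5⟩ := pr_move_common (h := ⟨h, by omega⟩) (i := ⟨i, by omega⟩)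
    (r := ⟨r, hrN⟩) hf hg hN hhi hm (hhi'.trans hri).ne hri.ne
  have a1 := xrow_lt hg hri
  have a2 := xrow_lt hf hhi'
  change pr f r = _ at e4
  change pr g r = _ at e5
  rw [e4, e5]
  refine mul_le_mul_of_nonneg_left ?_ hC
  rw [e1, e3] at a1
  rw [e1, e2, e3]
  have := two_factor_gt (a := xrow N f ⟨h, by omega⟩ - xrow N f ⟨r, hrN⟩)
    (b := xrow N f ⟨i, by omega⟩ - xrow N f ⟨r, hrN⟩) (by linarith) (by linarith)
  have hflip : ∀ u v : ℝ, (u - 1 - v) / (u - v) = (v - u + 1) / (v - u) := by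
    intro u v
    rw [← neg_div_neg_eq]; congr 1 <;> ring
  rw [hflip, hflip, hflip, hflip]
  refine le_trans (le_of_eq ?_) (this.trans (le_of_eq ?_)) <;> (congr 2 <;> ring)

def Upper (m : ℕ) (U : Set (ℕ → ℕ)) : Prop :=
  ∀ a ∈ U, ∀ b, isPartition b → psize b = m → dominates b a → b ∈ U

open Classical in
noncomputable def gU (N : ℕ) (U : Set (ℕ → ℕ)) (f : ℕ → ℕ) : ℝ :=
  ∑ r ∈ (remRows N f).filter (fun r => down f r ∈ U), pr f r

theorem gU_nonneg (N : ℕ) (U : Set (ℕ → ℕ)) (f : ℕ → ℕ) : 0 ≤ gU N U f :=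
  Finset.sum_nonneg fun r _ => pr_nonneg f r

theorem gU_step {n : ℕ} {U : Set (ℕ → ℕ)} (hU : Upper n U) {f g : ℕ → ℕ} {h i : ℕ}
    (hf : Par (n+1) f) (hg : Par (n+1) g) (hhi : h < i) (hm : moveBox f g i h) :
    gU (n+1) U f ≤ gU (n+1) U g := by
  classical
  have hiN : i < n + 1 := by
    by_contra hc
    have := hf.zero (a := i) (by omega)
    have := hm.1
    omega
  -- lower bound for gU g on tails
  have lower : ∀ s, (∀ r ∈ remRows (n+1) g, s ≤ r → down g r ∈ U) →
      ∑ r ∈ (Finset.range (n+1)).filter (fun r => s ≤ r), pr g r ≤ gU (n+1) U g := by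
    intro s hs
    have e : ∑ r ∈ (Finset.range (n+1)).filter (fun r => s ≤ r), pr g r =
        ∑ r ∈ (remRows (n+1) g).filter (fun r => s ≤ r), pr g r := by
      symm
      refine Finset.sum_subset (fun r hr => ?_) (fun r hr hr' => ?_)
      · simp only [remRows, Finset.mem_filter] at hr ⊢
        exact ⟨hr.1.1, hr.2⟩
      · simp only [remRows, Finset.mem_filter] at hr hr'
        unfold pr
        rw [if_neg]
        intro h'
        exact hr' ⟨⟨hr.1, h'⟩, hr.2⟩
    rw [e]
    refine Finset.sum_le_sum_of_subset_of_nonneg (fun r hr => ?_) fun r _ _ => pr_nonneg g r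
    rw [Finset.mem_filter] at hr ⊢
    exact ⟨hr.1, hs r hr.1 hr.2⟩
  rcases ((remRows (n+1) f).filter (fun r => down f r ∈ U)).eq_empty_or_nonempty with he | hne
  · rw [gU, he, Finset.sum_empty]; exact gU_nonneg _ _ _
  set A := (remRows (n+1) f).filter (fun r => down f r ∈ U) with hA
  obtain ⟨s, hsA, hsmin⟩ := Finset.exists_min_image A id hne
  simp only [id] at hsmin
  have hsA' := hsA
  rw [hA, Finset.mem_filter] at hsA'
  obtain ⟨hsrem, hsU⟩ := hsA'
  have hsr := (Finset.mem_filter.mp hsrem).2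
  have upper : gU (n+1) U f ≤ ∑ r ∈ (Finset.range (n+1)).filter (fun r => s ≤ r), pr f r := by
    refine Finset.sum_le_sum_of_subset_of_nonneg (fun r hr => ?_) fun r _ _ => pr_nonneg f r
    have h1 := hsmin r hr
    rw [Finset.mem_filter] at hr
    rw [Finset.mem_filter]
    exact ⟨(Finset.mem_filter.mp hr.1).1, h1⟩
  have hdom : ∀ r ∈ remRows (n+1) g, (s ≤ r ∨ (s ≤ i ∧ h ≤ r)) → down g r ∈ U := by
    intro r hr hc
    have hrr := (Finset.mem_filter.mp hr).2
    refine hU _ hsU _ (hg.down hrr).1 (hg.down hrr).2 fun k => ?_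
    have h1 := partialSum_down hrr k
    have h2 := partialSum_down hsr k
    have h3 := partialSum_move hhi hm k
    split_ifs at h1 h2 h3 <;> omega
  rcases le_or_gt s i with hsi | hsi
  · have h1 := lower (min s h) fun r hr hmr => hdom r hr (by omega)
    refine upper.trans (le_trans ?_ h1)
    have h2 : ∑ r ∈ (Finset.range (n+1)).filter (fun r => s ≤ r), pr f r ≤
        ∑ r ∈ (Finset.range (n+1)).filter (fun r => min s h ≤ r), pr f r := by
      refine Finset.sum_le_sum_of_subset_of_nonneg (fun r hr => ?_) fun r _ _ => pr_nonneg f r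
      rw [Finset.mem_filter] at hr ⊢
      exact ⟨hr.1, by omega⟩
    refine h2.trans ?_
    have e1 := Finset.sum_filter_add_sum_filter_not (Finset.range (n+1))
      (fun r => min s h ≤ r) (pr f)
    have e2 := Finset.sum_filter_add_sum_filter_not (Finset.range (n+1))
      (fun r => min s h ≤ r) (pr g)
    rw [pr_sum hf le_rfl] at e1
    rw [pr_sum hg le_rfl] at e2
    have h3 : ∑ r ∈ (Finset.range (n+1)).filter (fun r => ¬ min s h ≤ r), pr g r ≤
        ∑ r ∈ (Finset.range (n+1)).filter (fun r => ¬ min s h ≤ r), pr f r := by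
      refine Finset.sum_le_sum fun r hr => ?_
      rw [Finset.mem_filter] at hr
      exact pr_move_lt hf hg le_rfl hiN hhi hm (by omega)
    linarith
  · refine upper.trans (le_trans ?_ (lower s fun r hr hmr => hdom r hr (Or.inl hmr)))
    refine Finset.sum_le_sum fun r hr => ?_
    rw [Finset.mem_filter, Finset.mem_range] at hr
    exact pr_move_gt hf hg le_rfl hr.1 hhi hm (by omega)

theorem gU_mono {n : ℕ} {U : Set (ℕ → ℕ)} (hU : Upper n U) {f g : ℕ → ℕ}
    (hf : Par (n+1) f) (hg : Par (n+1) g) (hd : dominates g f) :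
    gU (n+1) U f ≤ gU (n+1) U g :=
  move_induction (gU (n+1) U) (fun _ _ _ _ h1 h2 h3 h4 => gU_step hU h1 h2 h3 h4) f g hf hg hd

theorem layer_cake {α : Type*} (S : Finset α) (d : α → ℝ) : ∀ (m : ℕ) (g : α → ℝ),
    (S.filter (fun x => 0 < g x)).card = m → (∀ x ∈ S, 0 ≤ g x) →
    (∀ t, 0 ≤ ∑ x ∈ S.filter (fun x => t ≤ g x), d x) → 0 ≤ ∑ x ∈ S, g x * d x := by
  classical
  intro m
  induction m using Nat.strong_induction_on with
  | _ m ih =>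
    intro g hcard hg hd
    rcases (S.filter (fun x => 0 < g x)).eq_empty_or_nonempty with he | hne
    · rw [Finset.sum_eq_zero]
      intro x hx
      have h1 : ¬ 0 < g x := fun h => by
        have : x ∈ S.filter (fun x => 0 < g x) := Finset.mem_filter.mpr ⟨hx, h⟩
        rw [he] at this
        simp at this
      have : g x = 0 := le_antisymm (not_lt.mp h1) (hg x hx)
      rw [this, zero_mul]
    · obtain ⟨y, hy, hmin⟩ := Finset.exists_min_image _ g hne
      rw [Finset.mem_filter] at hy
      have hval : ∀ x ∈ S, g x = 0 ∨ g y ≤ g x := by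
        intro x hx
        rcases (hg x hx).eq_or_lt with h | h
        · exact Or.inl h.symm
        · exact Or.inr (hmin x (Finset.mem_filter.mpr ⟨hx, h⟩))
      set g' : α → ℝ := fun x => max (g x - g y) 0 with hg'
      have hdec : ∑ x ∈ S, g x * d x = ∑ x ∈ S, g' x * d x +
          g y * ∑ x ∈ S.filter (fun x => g y ≤ g x), d x := by
        rw [Finset.sum_filter, Finset.mul_sum, ← Finset.sum_add_distrib]
        refine Finset.sum_congr rfl fun x hx => ?_
        rcases hval x hx with h | h
        · have h1 : ¬ g y ≤ g x := by rw [h]; exact not_le.mpr hy.2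
          have h2 : g' x = 0 := max_eq_right (by rw [h]; linarith [hy.2])
          rw [if_neg h1, h2, h]; ring
        · have h2 : g' x = g x - g y := max_eq_left (by linarith)
          rw [if_pos h, h2]; ring
      rw [hdec]
      refine add_nonneg ?_ (mul_nonneg hy.2.le (hd _))
      refine ih _ ?_ g' rfl (fun x _ => le_max_right _ _) fun t => ?_
      · rw [← hcard]
        refine Finset.card_lt_card ⟨fun x hx => ?_, fun hsub => ?_⟩
        · rw [Finset.mem_filter] at hx ⊢
          refine ⟨hx.1, ?_⟩
          rcases lt_max_iff.mp hx.2 with h | h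
          · linarith [hy.2]
          · exact absurd h (lt_irrefl _)
        · have := hsub (Finset.mem_filter.mpr hy)
          rw [Finset.mem_filter] at this
          simp [hg'] at this
      · rcases le_or_gt t 0 with ht | ht
        · have := hd 0
          rw [Finset.filter_true_of_mem hg] at this
          rwa [Finset.filter_true_of_mem fun x _ => ht.trans (le_max_right _ _)]
        · have := hd (t + g y)
          rwa [Finset.filter_congr (q := fun x => t ≤ g' x)] at this
          intro x _
          simp only [hg', le_max_iff]
          constructor
          · intro h; left; linarith
          · rintro (h | h) <;> linarith

noncomputable def parts (n : ℕ) : Finset (ℕ → ℕ) := (par_finite n).toFinset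

theorem mem_parts {n : ℕ} {f : ℕ → ℕ} : f ∈ parts n ↔ Par n f := by simp [parts]

theorem dimY_not {f : ℕ → ℕ} (h : ¬ isPartition f) : dimY f = 0 := by
  have : paths f = ∅ := by
    ext p
    simp only [Set.mem_empty_iff_false, iff_false]
    rintro ⟨_, hp, _, he⟩
    have := hp (psize f)
    rw [he _ le_rfl] at this
    exact h this
  rw [dimY_eq, this, Set.ncard_empty]

open Classical in
theorem finsum_mem_parts {n : ℕ} {rho : (ℕ → ℕ) → ℝ} (h : ∀ f, rho f ≠ 0 → Par n f)
    (U : Set (ℕ → ℕ)) : ∑ᶠ f ∈ U, rho f = ∑ f ∈ parts n, if f ∈ U then rho f else 0 := by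
  rw [finsum_mem_def, finsum_eq_sum_of_support_subset (s := parts n)]
  · exact Finset.sum_congr rfl fun f _ => by rw [Set.indicator_apply]
  · intro f hf
    rw [Function.mem_support, Set.indicator_apply] at hf
    rw [Finset.mem_coe, mem_parts]
    split_ifs at hf with h'
    · exact h f hf
    · exact absurd rfl hf

theorem projStep_measure {n : ℕ} {rho : (ℕ → ℕ) → ℝ} (h : isMeasureOn (n+1) rho) :
    isMeasureOn n (projStep rho) := by
  constructor
  · intro f
    unfold projStep
    refine finsum_nonneg fun l => finsum_nonneg fun _ => mul_nonneg (by positivity) (h.1 l)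
  · intro f hf
    unfold projStep at hf
    obtain ⟨l, hl, hl2⟩ := exists_ne_zero_of_finsum_mem_ne_zero hf
    have h1 : isPartition f := by
      by_contra hc
      rw [dimY_not hc] at hl2
      simp at hl2
    have h2 : Par (n+1) l := h.2 l (right_ne_zero_of_mul hl2)
    obtain ⟨r, hr, rfl⟩ := (addBox_iff le_rfl h2).1 ⟨h1, hl⟩
    exact h2.down (Finset.mem_filter.mp hr).2

theorem proj_sum {n : ℕ} {rho : (ℕ → ℕ) → ℝ} (h : isMeasureOn (n+1) rho) (U : Set (ℕ → ℕ)) :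
    ∑ᶠ f ∈ U, projStep rho f = ∑ l ∈ parts (n+1), gU (n+1) U l * rho l := by
  classical
  rw [finsum_mem_parts (n := n) (projStep_measure h).2]
  have e1 : ∀ mu, projStep rho mu = ∑ l ∈ parts (n+1),
      if addBox mu l then ((dimY mu : ℝ) / (dimY l : ℝ)) * rho l else 0 := by
    intro mu
    unfold projStep
    rw [finsum_mem_parts (n := n+1)]
    · rfl
    · intro f hf
      exact h.2 f (right_ne_zero_of_mul hf)
  have e2 : ∀ mu, (if mu ∈ U then projStep rho mu else 0) = ∑ l ∈ parts (n+1),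
      if mu ∈ U ∧ addBox mu l then ((dimY mu : ℝ) / (dimY l : ℝ)) * rho l else 0 := by
    intro mu
    rw [e1]
    by_cases hmu : mu ∈ U <;> simp [hmu]
  rw [Finset.sum_congr rfl fun mu _ => e2 mu, Finset.sum_comm]
  refine Finset.sum_congr rfl fun l hl => ?_
  rw [mem_parts] at hl
  rw [← Finset.sum_filter, ← Finset.sum_mul]
  congr 1
  have e3 : (parts n).filter (fun mu => mu ∈ U ∧ addBox mu l) =
      ((remRows (n+1) l).filter (fun r => down l r ∈ U)).image (down l) := by
    ext mu
    simp only [Finset.mem_filter, Finset.mem_image, mem_parts]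
    constructor
    · rintro ⟨h1, h2, h3⟩
      obtain ⟨r, hr, rfl⟩ := (addBox_iff le_rfl hl).1 ⟨h1.1, h3⟩
      exact ⟨r, ⟨hr, h2⟩, rfl⟩
    · rintro ⟨r, ⟨hr, h2⟩, rfl⟩
      exact ⟨hl.down (Finset.mem_filter.mp hr).2, h2,
        ((addBox_iff le_rfl hl).2 ⟨r, hr, rfl⟩).2⟩
  rw [e3, Finset.sum_image, gU]
  · refine Finset.sum_congr rfl fun r hr => ?_
    rw [Finset.mem_filter] at hr
    rw [pr, if_pos (Finset.mem_filter.mp hr.1).2]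
  · intro r hr s _ hrs
    rw [Finset.mem_coe, Finset.mem_filter] at hr
    exact down_inj (Finset.mem_filter.mp hr.1).2 hrs

theorem proj_step_dom {n : ℕ} {rho rho' : (ℕ → ℕ) → ℝ} (h : isMeasureOn (n+1) rho)
    (h' : isMeasureOn (n+1) rho') (hd : stochDom (n+1) rho rho') :
    stochDom n (projStep rho) (projStep rho') := by
  classical
  intro U hU
  rw [proj_sum h, proj_sum h', ← sub_nonneg, ← Finset.sum_sub_distrib]
  have key := layer_cake (parts (n+1)) (fun l => rho l - rho' l) _ (gU (n+1) U) rfl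
    (fun x _ => gU_nonneg _ _ _) ?_
  · refine key.trans_eq (Finset.sum_congr rfl fun l _ => by ring)
  · intro t
    have := hd {l | Par (n+1) l ∧ t ≤ gU (n+1) U l} ?_
    · rw [finsum_mem_parts (n := n+1) h.2, finsum_mem_parts (n := n+1) h'.2, ← sub_nonneg,
        ← Finset.sum_sub_distrib] at this
      refine this.trans_eq ?_
      rw [Finset.sum_filter]
      refine Finset.sum_congr rfl fun l hl => ?_
      rw [mem_parts] at hl
      by_cases ht : t ≤ gU (n+1) U l <;> simp [hl, ht]
    · rintro a ⟨ha, hta⟩ b hb hbs hdom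
      exact ⟨⟨hb, hbs⟩, hta.trans (gU_mono hU ha ⟨hb, hbs⟩ hdom)⟩

theorem proj_iter (m k : ℕ) : ∀ (rho rho' : (ℕ → ℕ) → ℝ), isMeasureOn (k + m) rho →
    isMeasureOn (k + m) rho' → stochDom (k + m) rho rho' →
    stochDom k (projStep^[m] rho) (projStep^[m] rho') := by
  induction m with
  | zero => intro rho rho' _ _ h; exact h
  | succ m ih =>
    intro rho rho' h h' hd
    rw [Function.iterate_succ_apply, Function.iterate_succ_apply]
    exact ih _ _ (projStep_measure h) (projStep_measure h') (proj_step_dom h h' hd)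

theorem projection_preserves_stochastic_dominance (n k : ℕ) (hk : k < n)
    (rho rho' : (ℕ → ℕ) → ℝ)
    (hrho : isMeasureOn n rho) (hrho' : isMeasureOn n rho')
    (hmass : ∑ᶠ f, rho f = ∑ᶠ f, rho' f)
    (hdom : stochDom n rho rho') :
    stochDom k (projStep^[n - k] rho) (projStep^[n - k] rho') := by
  have e : k + (n - k) = n := by omega
  exact proj_iter (n - k) k rho rho' (by rwa [e]) (by rwa [e]) (by rwa [e])
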